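/- arXiv:2107.08810 — 3 statements merged into one kernel-verified Lean document; each statement's English description precedes it below -/
import Mathlib

section
/- Let a > 0 and γ > 3/2, and let P(ρ) = a(ρ^γ − γρ + γ − 1)/(γ − 1) be the relative pressure potential. Then there exist constants c₁, c₂ > 0 (depending only on a and γ) such that for every ρ ≥ 0: if |ρ − 1| < 1/2 then c₁ (ρ − 1)² ≤ P(ρ) ≤ c₂ (ρ − 1)², and if |ρ − 1| ≥ 1/2 then c₁ |ρ − 1|^γ ≤ P(ρ) ≤ c₂ |ρ − 1|^γ. -/
/-!
Off its only zero `ρ = 1` the potential is positive and continuous on `[0, ∞)`. At `ρ = 1` it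
vanishes to second order with second derivative `a γ > 0`, and at infinity it is equivalent to
`a ρ ^ γ / (γ - 1)`. Each comparison therefore holds locally, and compactness makes it uniform.
-/

open Set Filter Asymptotics Topology

section Asymptotics

variable {α E F : Type*} [SeminormedAddCommGroup E] [SeminormedAddCommGroup F]

lemma exists_mem_isTheta_principal {f : α → E} {g : α → F} {l : Filter α} (h : f =Θ[l] g) :
    ∃ t ∈ l, f =Θ[𝓟 t] g := by
  obtain ⟨c, hc⟩ := h.1.bound
  obtain ⟨d, hd⟩ := h.2.bound
  exact ⟨_, inter_mem hc hd, isBigO_principal.2 ⟨c, fun _ hx => hx.1⟩,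
    isBigO_principal.2 ⟨d, fun _ hx => hx.2⟩⟩

lemma isTheta_principal_of_forall_nhdsWithin [TopologicalSpace α] {f : α → E} {g : α → F}
    {s : Set α} (hs : IsCompact s) (h : ∀ x ∈ s, f =Θ[𝓝[s] x] g) : f =Θ[𝓟 s] g := by
  refine hs.induction_on (p := fun t => f =Θ[𝓟 t] g) ?_ ?_ ?_ ?_
  · simp only [principal_empty, isTheta_bot]
  · exact fun _ _ hst ht => ht.mono (principal_mono.2 hst)
  · exact fun _ _ hs ht => sup_principal (α := α) ▸ hs.sup ht
  · exact fun x hx => exists_mem_isTheta_principal (h x hx)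

lemma isTheta_nhds_of_ne_zero [TopologicalSpace α] {E' F' : Type*} [NormedAddCommGroup E']
    [NormedAddCommGroup F'] {f : α → E'} {g : α → F'} {x : α}
    (hf : ContinuousAt f x) (hg : ContinuousAt g x) (hfx : f x ≠ 0) (hgx : g x ≠ 0) :
    f =Θ[𝓝 x] g :=
  ((isEquivalent_const_iff_tendsto hfx).2 hf).isTheta.trans <|
    (isTheta_const_const hfx hgx).trans ((isEquivalent_const_iff_tendsto hgx).2 hg).isTheta_symm

lemma eventually_inv_mul_le_and_le_mul_of_isTheta {f g : α → ℝ} {s : Set α} (h : f =Θ[𝓟 s] g)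
    (hf : ∀ x ∈ s, 0 ≤ f x) (hg : ∀ x ∈ s, 0 ≤ g x) :
    ∀ᶠ C : ℝ in atTop, ∀ x ∈ s, C⁻¹ * g x ≤ f x ∧ f x ≤ C * g x := by
  filter_upwards [isBigO_iff_eventually_isBigOWith.1 h.1, isBigO_iff_eventually_isBigOWith.1 h.2,
    eventually_gt_atTop 0] with C hfg hgf hC x hx
  have hfx : f x ≤ C * g x := by
    simpa only [Real.norm_of_nonneg, hf x hx, hg x hx] using isBigOWith_principal.1 hfg x hx
  have hgx : g x ≤ C * f x := by
    simpa only [Real.norm_of_nonneg, hf x hx, hg x hx] using isBigOWith_principal.1 hgf x hx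
  exact ⟨(inv_mul_le_iff₀ hC).2 hgx, hfx⟩

lemma isTheta_sub_sq_of_hasDerivAt {f f' : ℝ → ℝ} {x₀ c : ℝ}
    (hf : ∀ᶠ x in 𝓝 x₀, HasDerivAt f (f' x) x) (hf' : HasDerivAt f' c x₀) (hc : c ≠ 0)
    (hf₀ : f x₀ = 0) (hf'₀ : f' x₀ = 0) : f =Θ[𝓝 x₀] fun x => (x - x₀) ^ 2 := by
  have hsq (x : ℝ) : HasDerivAt (fun x => (x - x₀) ^ 2) (2 * (x - x₀)) x := by
    simpa using ((hasDerivAt_id x).sub_const x₀).fun_pow 2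
  have hslope : Tendsto (fun x => f' x / (2 * (x - x₀))) (𝓝[≠] x₀) (𝓝 (c / 2)) := by
    refine ((hasDerivAt_iff_tendsto_slope.1 hf').div_const 2).congr fun x => ?_
    rw [slope_def_field, hf'₀, sub_zero, div_div, mul_comm]
  have hquot : Tendsto (fun x => f x / (x - x₀) ^ 2) (𝓝[≠] x₀) (𝓝 (c / 2)) := by
    refine HasDerivAt.lhopital_zero_nhdsNE (hf.filter_mono nhdsWithin_le_nhds)
      (.of_forall hsq) ?_ ?_ ?_ hslope
    · filter_upwards [self_mem_nhdsWithin] with x hx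
      exact mul_ne_zero two_ne_zero (sub_ne_zero.2 hx)
    · simpa only [hf₀] using hf.self_of_nhds.continuousAt.tendsto.mono_left nhdsWithin_le_nhds
    · simpa using (hsq x₀).continuousAt.tendsto.mono_left nhdsWithin_le_nhds
  have hpunctured : f =Θ[𝓝[≠] x₀] fun x => (x - x₀) ^ 2 :=
    (isTheta_of_div_tendsto_nhds_ne_zero hquot (div_ne_zero hc two_ne_zero)).symm
  have hpoint : f =Θ[pure x₀] fun x => (x - x₀) ^ 2 :=
    EventuallyEq.isTheta (eventually_pure.2 (by simp [hf₀]))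
  rw [← nhdsNE_sup_pure]
  exact hpunctured.sup hpoint

lemma isLittleO_const_rpow_atTop {p : ℝ} (c : ℝ) (hp : 0 < p) :
    (fun _ : ℝ => c) =o[atTop] fun x : ℝ => x ^ p :=
  isLittleO_const_left.2 <| .inr <| tendsto_norm_atTop_atTop.comp (tendsto_rpow_atTop hp)

lemma isLittleO_const_mul_rpow_atTop {p : ℝ} (c : ℝ) (hp : 1 < p) :
    (fun x : ℝ => c * x) =o[atTop] fun x : ℝ => x ^ p := by
  refine ((isLittleO_const_rpow_atTop c (sub_pos.2 hp)).mul_isBigO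
    (isBigO_refl (fun x : ℝ => x) atTop)).congr' .rfl ?_
  filter_upwards [eventually_gt_atTop 0] with x hx
  rw [← Real.rpow_add_one hx.ne', sub_add_cancel]

end Asymptotics

/-- The Bregman divergence of `t ↦ t ^ γ` between `x` and `1`, that is, the gap at `x` between the
power and its tangent line at `1`. The relative pressure potential is `a / (γ - 1)` times it. -/
noncomputable def rpowBregman (γ x : ℝ) : ℝ := x ^ γ - γ * x + γ - 1

namespace rpowBregman

variable {γ : ℝ}

lemma pos {x : ℝ} (hγ : 1 < γ) (hx : 0 ≤ x) (hx₁ : x ≠ 1) : 0 < rpowBregman γ x := by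
  have bernoulli : 1 + γ * (x - 1) < (1 + (x - 1)) ^ γ :=
    one_add_mul_self_lt_rpow_one_add (by linarith) (sub_ne_zero.2 hx₁) hγ
  rw [add_sub_cancel] at bernoulli
  unfold rpowBregman
  linarith

lemma apply_one : rpowBregman γ 1 = 0 := by simp [rpowBregman]

lemma nonneg {x : ℝ} (hγ : 1 < γ) (hx : 0 ≤ x) : 0 ≤ rpowBregman γ x := by
  rcases eq_or_ne x 1 with rfl | hx₁
  · exact apply_one.ge
  · exact (pos hγ hx hx₁).le

lemma continuous (hγ : 0 ≤ γ) : Continuous (rpowBregman γ) := by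
  have := Real.continuous_rpow_const hγ
  unfold rpowBregman
  fun_prop

lemma hasDerivAt {x : ℝ} (hx : x ≠ 0) :
    HasDerivAt (rpowBregman γ) (γ * x ^ (γ - 1) - γ) x := by
  simpa only [mul_one] using! (((Real.hasDerivAt_rpow_const (p := γ) (Or.inl hx)).fun_sub
    ((hasDerivAt_id' x).const_mul γ)).add_const γ).sub_const 1

lemma isTheta_nhds_one (hγ₀ : γ ≠ 0) (hγ₁ : γ ≠ 1) :
    rpowBregman γ =Θ[𝓝 1] fun x => (x - 1) ^ 2 := by
  have hderiv : HasDerivAt (fun x : ℝ => γ * x ^ (γ - 1) - γ) (γ * (γ - 1)) 1 := by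
    simpa using ((Real.hasDerivAt_rpow_const (p := γ - 1) (Or.inl one_ne_zero)).const_mul
      γ).sub_const γ
  exact isTheta_sub_sq_of_hasDerivAt ((eventually_ne_nhds one_ne_zero).mono fun _ => hasDerivAt)
    hderiv (mul_ne_zero hγ₀ (sub_ne_zero.2 hγ₁)) apply_one (by simp)

lemma isTheta_atTop (hγ : 1 < γ) : rpowBregman γ =Θ[atTop] fun x => |x - 1| ^ γ := by
  have hconst (c : ℝ) : (fun _ : ℝ => c) =o[atTop] fun x : ℝ => x ^ γ :=
    isLittleO_const_rpow_atTop c (by linarith)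
  have hpow : rpowBregman γ =Θ[atTop] fun x : ℝ => x ^ γ :=
    (((IsEquivalent.refl.sub_isLittleO (isLittleO_const_mul_rpow_atTop γ hγ)).add_isLittleO
      (hconst γ)).sub_isLittleO (hconst 1)).isTheta
  have hshift : (fun x : ℝ => |x - 1|) =Θ[atTop] fun x => x :=
    isTheta_norm_left.2
      (IsEquivalent.refl.sub_isLittleO (isLittleO_const_id_atTop (1 : ℝ))).isTheta
  exact hpow.trans
    (hshift.rpow (.of_forall fun _ => abs_nonneg _) (eventually_ge_atTop 0)).symm

lemma isTheta_principal_of_isCompact {s : Set ℝ} (hγ : 1 < γ) (hs : IsCompact s)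
    (hs₀ : s ⊆ Ici 0) : rpowBregman γ =Θ[𝓟 s] fun x => (x - 1) ^ 2 := by
  refine isTheta_principal_of_forall_nhdsWithin hs fun x hx => .mono ?_ nhdsWithin_le_nhds
  rcases eq_or_ne x 1 with rfl | hx₁
  · exact isTheta_nhds_one (by linarith) hγ.ne'
  · exact isTheta_nhds_of_ne_zero (continuous (by linarith)).continuousAt (by fun_prop)
      (pos hγ (hs₀ hx) hx₁).ne' (pow_ne_zero 2 (sub_ne_zero.2 hx₁))

lemma isTheta_principal_of_isClosed {s : Set ℝ} (hγ : 1 < γ) (hs : IsClosed s)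
    (hs₀ : s ⊆ Ici 0) (hs₁ : 1 ∉ s) : rpowBregman γ =Θ[𝓟 s] fun x => |x - 1| ^ γ := by
  have hγ₀ : 0 ≤ γ := by linarith
  obtain ⟨t, ht, htail⟩ := exists_mem_isTheta_principal (isTheta_atTop hγ)
  obtain ⟨b, hb⟩ := mem_atTop_sets.1 ht
  have hcompact : IsCompact (s ∩ Icc 0 b) := isCompact_Icc.inter_left hs
  have hbounded : rpowBregman γ =Θ[𝓟 (s ∩ Icc 0 b)] fun x => |x - 1| ^ γ := by
    refine isTheta_principal_of_forall_nhdsWithin hcompact fun x hx =>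
      .mono ?_ nhdsWithin_le_nhds
    have hx₁ : x ≠ 1 := ne_of_mem_of_not_mem hx.1 hs₁
    have hcont : Continuous fun x : ℝ => |x - 1| ^ γ :=
      (continuous_abs.comp (continuous_sub_right 1)).rpow_const fun _ => .inr hγ₀
    exact isTheta_nhds_of_ne_zero (continuous hγ₀).continuousAt hcont.continuousAt
      (pos hγ (hs₀ hx.1) hx₁).ne' (Real.rpow_pos_of_pos (abs_pos.2 (sub_ne_zero.2 hx₁)) γ).ne'
  have hcover : s ⊆ s ∩ Icc 0 b ∪ t := fun x hx =>
    (le_total x b).imp (fun hxb => ⟨hx, hs₀ hx, hxb⟩) (hb x)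
  refine IsTheta.mono ?_ (principal_mono.2 hcover)
  rw [← sup_principal]
  exact hbounded.sup htail

end rpowBregman

theorem stmt_0_general (a γ r : ℝ) (ha : 0 < a) (hγ : 1 < γ) (hr : 0 < r) :
    ∃ c₁ c₂ : ℝ, 0 < c₁ ∧ 0 < c₂ ∧ ∀ ρ : ℝ, 0 ≤ ρ →
      ((|ρ - 1| < r →
          c₁ * (ρ - 1) ^ 2 ≤ a * (ρ ^ γ - γ * ρ + γ - 1) / (γ - 1) ∧
          a * (ρ ^ γ - γ * ρ + γ - 1) / (γ - 1) ≤ c₂ * (ρ - 1) ^ 2) ∧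
       (r ≤ |ρ - 1| →
          c₁ * |ρ - 1| ^ γ ≤ a * (ρ ^ γ - γ * ρ + γ - 1) / (γ - 1) ∧
          a * (ρ ^ γ - γ * ρ + γ - 1) / (γ - 1) ≤ c₂ * |ρ - 1| ^ γ)) := by
  have hk : 0 < a / (γ - 1) := div_pos ha (sub_pos.2 hγ)
  have hpotential (ρ : ℝ) :
      a * (ρ ^ γ - γ * ρ + γ - 1) / (γ - 1) = a / (γ - 1) * rpowBregman γ ρ :=
    mul_div_right_comm _ _ _
  have hnonneg {ρ : ℝ} (hρ : 0 ≤ ρ) : 0 ≤ a / (γ - 1) * rpowBregman γ ρ :=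
    mul_nonneg hk.le (rpowBregman.nonneg hγ hρ)
  have hnear := rpowBregman.isTheta_principal_of_isCompact hγ
    ((isCompact_closedBall 1 r).inter_left isClosed_Ici) inter_subset_left
  have hfar := rpowBregman.isTheta_principal_of_isClosed hγ
    (isClosed_Ici.sdiff Metric.isOpen_ball) sdiff_subset fun h => h.2 (Metric.mem_ball_self hr)
  have hC_near := eventually_inv_mul_le_and_le_mul_of_isTheta (hnear.const_mul_left hk.ne')
    (fun _ hρ => hnonneg hρ.1) fun _ _ => sq_nonneg _
  have hC_far := eventually_inv_mul_le_and_le_mul_of_isTheta (hfar.const_mul_left hk.ne')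
    (fun _ hρ => hnonneg hρ.1) fun _ _ => by positivity
  obtain ⟨C, ⟨hC_near, hC_far⟩, hC⟩ := ((hC_near.and hC_far).and (eventually_gt_atTop 0)).exists
  simp only [hpotential]
  exact ⟨C⁻¹, C, inv_pos.2 hC, hC, fun ρ hρ =>
    ⟨fun h => hC_near ρ ⟨hρ, h.le⟩, fun h => hC_far ρ ⟨hρ, h.not_gt⟩⟩⟩

/-- For `a > 0`, `γ > 3/2`, the relative pressure potential
`P(ρ) = a(ρ^γ − γρ + γ − 1)/(γ − 1)` is comparable to `(ρ−1)²` where `|ρ−1| < 1/2`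
and to `|ρ−1|^γ` where `|ρ−1| ≥ 1/2`. -/
theorem stmt_0 (a γ : ℝ) (ha : 0 < a) (hγ : 3 / 2 < γ) :
    ∃ c₁ c₂ : ℝ, 0 < c₁ ∧ 0 < c₂ ∧ ∀ ρ : ℝ, 0 ≤ ρ →
      ((|ρ - 1| < 1 / 2 →
          c₁ * (ρ - 1) ^ 2 ≤ a * (ρ ^ γ - γ * ρ + γ - 1) / (γ - 1) ∧
          a * (ρ ^ γ - γ * ρ + γ - 1) / (γ - 1) ≤ c₂ * (ρ - 1) ^ 2) ∧
       (1 / 2 ≤ |ρ - 1| →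
          c₁ * |ρ - 1| ^ γ ≤ a * (ρ ^ γ - γ * ρ + γ - 1) / (γ - 1) ∧
          a * (ρ ^ γ - γ * ρ + γ - 1) / (γ - 1) ≤ c₂ * |ρ - 1| ^ γ)) :=
  stmt_0_general a γ (1 / 2) ha (by linarith) (by norm_num)
end

section
/- Let γ > 3/2 and γ′ = γ/(γ − 1). There exists a constant c = c(γ) such that the following holds. Let ε > 0 and let ρ : ℝ³ → [0, ∞) be measurable with ‖(ρ − 1) 1_{{|ρ−1| < 1/2}}‖_{L²(ℝ³)} ≤ ε and ‖(ρ − 1) 1_{{|ρ−1| ≥ 1/2}}‖_{L^γ(ℝ³)} ≤ ε^{2/γ}. Then for every f ∈ C_c^∞(ℝ³; ℝ³): | ∫_{ℝ³} (1 − ρ(x)) |f(x)|² dx | ≤ c ε^{2/γ} ‖f‖_{L²}^{(3/γ′) − 1} ‖∇f‖_{L²}^{3(1 − 1/γ′)} + c ε ‖f‖_{L²}^{1/2} ‖∇f‖_{L²}^{3/2}. -/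
open MeasureTheory

/-!
Hölder's inequality with the three factors `|g|`, `|f| ^ (2 - n / q)`, `|f| ^ (n / q)` in
`L^q`, `L²` and `L^(2n / (n - 2))`, followed by the Sobolev inequality for the last one, gives
`∫ |g| |f|² ≤ C ‖g‖_q ‖f‖₂ ^ (2 - n / q) ‖∇f‖₂ ^ (n / q)` in dimension `n ≥ 3` for `q ≥ n / 2`.
Apply this with `q = 2` and with `q = γ` to the two parts of `ρ - 1`.
-/

section Holder

variable {α : Type*} [MeasurableSpace α] {μ : Measure α}

theorem lintegral_prod_rpow_le_prod_eLpNorm_rpow {ι : Type*} {s : Finset ι}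
    {f : ι → α → ENNReal} (hf : ∀ i ∈ s, AEMeasurable (f i) μ) {p a : ι → ℝ}
    (hp : ∀ i ∈ s, 0 < p i) (ha : ∀ i ∈ s, 0 ≤ a i) (hpa : ∑ i ∈ s, a i / p i = 1) :
    ∫⁻ x, ∏ i ∈ s, f i x ^ a i ∂μ ≤ ∏ i ∈ s, eLpNorm (f i) (.ofReal (p i)) μ ^ a i := by
  calc ∫⁻ x, ∏ i ∈ s, f i x ^ a i ∂μ
      = ∫⁻ x, ∏ i ∈ s, (f i x ^ p i) ^ (a i / p i) ∂μ := by
        refine lintegral_congr fun x => Finset.prod_congr rfl fun i hi => ?_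
        rw [← ENNReal.rpow_mul, mul_div_cancel₀ _ (hp i hi).ne']
    _ ≤ ∏ i ∈ s, (∫⁻ x, f i x ^ p i ∂μ) ^ (a i / p i) :=
        ENNReal.lintegral_prod_norm_pow_le s (fun i hi => (hf i hi).pow_const _) hpa
          fun i hi => div_nonneg (ha i hi) (hp i hi).le
    _ = ∏ i ∈ s, eLpNorm (f i) (.ofReal (p i)) μ ^ a i := by
        refine Finset.prod_congr rfl fun i hi => ?_
        rw [eLpNorm_eq_lintegral_rpow_enorm_toReal (by simpa using hp i hi) ENNReal.ofReal_ne_top,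
          ENNReal.toReal_ofReal (hp i hi).le, ← ENNReal.rpow_mul, one_div_mul_eq_div]
        simp only [enorm_eq_self]

theorem lintegral_enorm_mul_enorm_rpow_add_le {G F : Type*} [NormedAddCommGroup G]
    [NormedAddCommGroup F] {g : α → G} {f : α → F} (hg : AEStronglyMeasurable g μ)
    (hf : AEStronglyMeasurable f μ) {q p r a b : ℝ} (hq : 0 < q) (hp : 0 < p) (hr : 0 < r)
    (ha : 0 ≤ a) (hb : 0 ≤ b) (hexp : 1 / q + a / p + b / r = 1) :
    ∫⁻ x, ‖g x‖ₑ * ‖f x‖ₑ ^ (a + b) ∂μ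
      ≤ eLpNorm g (.ofReal q) μ * eLpNorm f (.ofReal p) μ ^ a * eLpNorm f (.ofReal r) μ ^ b := by
  have holder := lintegral_prod_rpow_le_prod_eLpNorm_rpow (μ := μ) (s := Finset.univ)
    (f := ![(‖g ·‖ₑ), (‖f ·‖ₑ), (‖f ·‖ₑ)]) (p := ![q, p, r]) (a := ![1, a, b])
    (by simp [Fin.forall_fin_succ, hg.enorm, hf.enorm])
    (by simp [Fin.forall_fin_succ, hq, hp, hr]) (by simp [Fin.forall_fin_succ, ha, hb])
    (by simpa [Fin.sum_univ_three] using hexp)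
  simpa [Fin.prod_univ_three, ENNReal.rpow_add_of_nonneg, ha, hb, mul_assoc] using holder

end Holder

theorem indicator_lt_add_indicator_le {α β M : Type*} [LinearOrder β] [AddZeroClass M]
    (u : α → β) (b : β) (v : α → M) :
    {x | u x < b}.indicator v + {x | b ≤ u x}.indicator v = v := by
  simpa only [Set.compl_ofPred, not_lt] using Set.indicator_self_add_compl {x | u x < b} v

theorem integrable_mul_norm_sq {X F : Type*} [TopologicalSpace X] [T2Space X] [MeasurableSpace X]
    [OpensMeasurableSpace X] {μ : Measure X} [NormedAddCommGroup F] {g : X → ℝ}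
    (hg : LocallyIntegrable g μ) {f : X → F} (hf : Continuous f) (hfc : HasCompactSupport f) :
    Integrable (fun x => g x * ‖f x‖ ^ 2) μ :=
  hg.integrable_smul_right_of_hasCompactSupport (by fun_prop)
    (hfc.comp_left (g := fun y => ‖y‖ ^ 2) (by simp))

section Sobolev

open Module

variable {E F : Type*} [NormedAddCommGroup E] [NormedSpace ℝ E] [FiniteDimensional ℝ E]
  [MeasurableSpace E] [BorelSpace E] {μ : Measure E} [μ.IsAddHaarMeasure]
  [NormedAddCommGroup F] [InnerProductSpace ℝ F]

theorem eLpNorm_le_eLpNorm_fderiv_two (hE : 2 < finrank ℝ E) {f : E → F} (hf : ContDiff ℝ 1 f)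
    (hfc : HasCompactSupport f) :
    eLpNorm f (.ofReal (2 * finrank ℝ E / (finrank ℝ E - 2))) μ
      ≤ eLpNormLESNormFDerivOfEqInnerConst μ 2 * eLpNorm (fderiv ℝ f) 2 μ := by
  have hn : (2 : ℝ) < finrank ℝ E := by exact_mod_cast hE
  have hr : 0 ≤ 2 * (finrank ℝ E : ℝ) / (finrank ℝ E - 2) :=
    div_nonneg (by positivity) (by linarith)
  refine eLpNorm_le_eLpNorm_fderiv_of_eq_inner μ hf hfc (p := 2) one_le_two (by lia) ?_
  rw [Real.coe_toNNReal _ hr]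
  push_cast
  field_simp

theorem lintegral_enorm_mul_enorm_sq_le {G : Type*} [NormedAddCommGroup G]
    (hE : 2 < finrank ℝ E) {q : ℝ} (hq : finrank ℝ E / 2 ≤ q) {g : E → G}
    (hg : AEStronglyMeasurable g μ) {f : E → F} (hf : ContDiff ℝ 1 f)
    (hfc : HasCompactSupport f) :
    ∫⁻ x, ‖g x‖ₑ * ‖f x‖ₑ ^ 2 ∂μ
      ≤ eLpNorm g (.ofReal q) μ * eLpNorm f 2 μ ^ (2 - finrank ℝ E / q)
        * (eLpNormLESNormFDerivOfEqInnerConst μ 2 * eLpNorm (fderiv ℝ f) 2 μ)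
          ^ (finrank ℝ E / q) := by
  have hn : (2 : ℝ) < finrank ℝ E := by exact_mod_cast hE
  have hq0 : 0 < q := by linarith
  have ha : 0 ≤ 2 - finrank ℝ E / q := sub_nonneg.2 ((div_le_iff₀ hq0).2 (by linarith))
  have hb : 0 ≤ finrank ℝ E / q := by positivity
  have hr : 0 < 2 * (finrank ℝ E : ℝ) / (finrank ℝ E - 2) :=
    div_pos (by linarith) (by linarith)
  have hexp : 1 / q + (2 - finrank ℝ E / q) / 2
      + finrank ℝ E / q / (2 * finrank ℝ E / (finrank ℝ E - 2)) = 1 := by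
    have : (finrank ℝ E : ℝ) - 2 ≠ 0 := by linarith
    field_simp
    ring
  have interpolation := lintegral_enorm_mul_enorm_rpow_add_le hg
    (hf.continuous.aestronglyMeasurable (μ := μ)) hq0 two_pos hr ha hb hexp
  simp only [sub_add_cancel, ENNReal.rpow_ofNat, ENNReal.ofReal_ofNat] at interpolation
  refine interpolation.trans ?_
  gcongr
  exact eLpNorm_le_eLpNorm_fderiv_two hE hf hfc

theorem abs_integral_mul_norm_sq_le (hE : 2 < finrank ℝ E) {q : ℝ} (hq : finrank ℝ E / 2 ≤ q)
    {g : E → ℝ} (hg : MemLp g (.ofReal q) μ) {f : E → F} (hf : ContDiff ℝ 1 f)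
    (hfc : HasCompactSupport f) :
    |∫ x, g x * ‖f x‖ ^ 2 ∂μ|
      ≤ eLpNormLESNormFDerivOfEqInnerConst μ 2 ^ (finrank ℝ E / q : ℝ)
        * (eLpNorm g (.ofReal q) μ).toReal * (eLpNorm f 2 μ).toReal ^ (2 - finrank ℝ E / q)
        * (eLpNorm (fderiv ℝ f) 2 μ).toReal ^ (finrank ℝ E / q) := by
  have hq0 : 0 < q := by
    have : (2 : ℝ) < finrank ℝ E := by exact_mod_cast hE
    linarith
  have ha : 0 ≤ 2 - finrank ℝ E / q := sub_nonneg.2 ((div_le_iff₀ hq0).2 (by linarith))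
  have hb : 0 ≤ finrank ℝ E / q := by positivity
  have hf_top : eLpNorm f 2 μ ≠ ⊤ :=
    (hf.continuous.memLp_of_hasCompactSupport hfc).eLpNorm_ne_top
  have hdf_top : eLpNorm (fderiv ℝ f) 2 μ ≠ ⊤ :=
    ((hf.continuous_fderiv one_ne_zero).memLp_of_hasCompactSupport (hfc.fderiv ℝ)).eLpNorm_ne_top
  have henorm : ‖∫ x, g x * ‖f x‖ ^ 2 ∂μ‖ₑ
      ≤ eLpNorm g (.ofReal q) μ * eLpNorm f 2 μ ^ (2 - finrank ℝ E / q)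
        * (eLpNormLESNormFDerivOfEqInnerConst μ 2 * eLpNorm (fderiv ℝ f) 2 μ)
          ^ (finrank ℝ E / q) := by
    refine (enorm_integral_le_lintegral_enorm _).trans ?_
    simpa only [enorm_mul, enorm_pow, enorm_norm] using
      lintegral_enorm_mul_enorm_sq_le hE hq hg.aestronglyMeasurable hf hfc
  have hreal := ENNReal.toReal_mono (by finiteness [hg.eLpNorm_ne_top]) henorm
  rw [toReal_enorm, Real.norm_eq_abs] at hreal
  refine hreal.trans_eq ?_
  simp only [ENNReal.toReal_mul, ← ENNReal.toReal_rpow, ENNReal.coe_toReal]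
  rw [Real.mul_rpow NNReal.zero_le_coe ENNReal.toReal_nonneg]
  ring

theorem abs_integral_add_mul_norm_sq_le (hE : 2 < finrank ℝ E) {p q : ℝ}
    (hp : finrank ℝ E / 2 ≤ p) (hq : finrank ℝ E / 2 ≤ q) {g h : E → ℝ}
    (hg : MemLp g (.ofReal p) μ) (hh : MemLp h (.ofReal q) μ) {f : E → F}
    (hf : ContDiff ℝ 1 f) (hfc : HasCompactSupport f) :
    |∫ x, (g x + h x) * ‖f x‖ ^ 2 ∂μ|
      ≤ eLpNormLESNormFDerivOfEqInnerConst μ 2 ^ (finrank ℝ E / p : ℝ)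
          * (eLpNorm g (.ofReal p) μ).toReal * (eLpNorm f 2 μ).toReal ^ (2 - finrank ℝ E / p)
          * (eLpNorm (fderiv ℝ f) 2 μ).toReal ^ (finrank ℝ E / p)
        + eLpNormLESNormFDerivOfEqInnerConst μ 2 ^ (finrank ℝ E / q : ℝ)
          * (eLpNorm h (.ofReal q) μ).toReal * (eLpNorm f 2 μ).toReal ^ (2 - finrank ℝ E / q)
          * (eLpNorm (fderiv ℝ f) 2 μ).toReal ^ (finrank ℝ E / q) := by
  have hn : (2 : ℝ) < finrank ℝ E := by exact_mod_cast hE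
  have hg_int := integrable_mul_norm_sq
    (hg.locallyIntegrable (ENNReal.one_le_ofReal.2 (by linarith))) hf.continuous hfc
  have hh_int := integrable_mul_norm_sq
    (hh.locallyIntegrable (ENNReal.one_le_ofReal.2 (by linarith))) hf.continuous hfc
  simp only [add_mul]
  rw [integral_add hg_int hh_int]
  exact (abs_add_le _ _).trans (add_le_add (abs_integral_mul_norm_sq_le hE hp hg hf hfc)
    (abs_integral_mul_norm_sq_le hE hq hh hf hfc))

theorem stmt_10_general (hE : 2 < finrank ℝ E) (hE4 : finrank ℝ E ≤ 4) {γ : ℝ}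
    (hγ : finrank ℝ E / 2 ≤ γ) :
    ∃ c : ℝ, 0 < c ∧ ∀ ε : ℝ, 0 ≤ ε → ∀ ρ : E → ℝ, AEStronglyMeasurable ρ μ →
      eLpNorm ({x | |ρ x - 1| < 1 / 2}.indicator fun x => ρ x - 1) 2 μ ≤ .ofReal ε →
      eLpNorm ({x | 1 / 2 ≤ |ρ x - 1|}.indicator fun x => ρ x - 1) (.ofReal γ) μ
          ≤ .ofReal (ε ^ (2 / γ)) →
      ∀ f : E → F, ContDiff ℝ 1 f → HasCompactSupport f →
        |∫ x, (1 - ρ x) * ‖f x‖ ^ 2 ∂μ|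
          ≤ c * ε ^ (2 / γ) * (eLpNorm f 2 μ).toReal ^ (2 - finrank ℝ E / γ)
              * (eLpNorm (fderiv ℝ f) 2 μ).toReal ^ (finrank ℝ E / γ)
            + c * ε * (eLpNorm f 2 μ).toReal ^ (2 - finrank ℝ E / 2 : ℝ)
              * (eLpNorm (fderiv ℝ f) 2 μ).toReal ^ (finrank ℝ E / 2 : ℝ) := by
  have hp : (finrank ℝ E : ℝ) / 2 ≤ 2 := by
    have : (finrank ℝ E : ℝ) ≤ 4 := by exact_mod_cast hE4
    linarith
  set K : ℝ := ↑(eLpNormLESNormFDerivOfEqInnerConst μ 2) with hK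
  refine ⟨K ^ (finrank ℝ E / γ) + K ^ (finrank ℝ E / 2 : ℝ) + 1, by positivity, ?_⟩
  intro ε hε ρ hρ hsmall hlarge f hf hfc
  set g := {x | |ρ x - 1| < 1 / 2}.indicator fun x => ρ x - 1
  set h := {x | 1 / 2 ≤ |ρ x - 1|}.indicator fun x => ρ x - 1
  have hρ1 : AEStronglyMeasurable (fun x => ρ x - 1) μ := hρ.sub aestronglyMeasurable_const
  have hdist : AEMeasurable (fun x => |ρ x - 1|) μ := hρ1.norm.aemeasurable
  have hg : MemLp g (.ofReal 2) μ := by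
    rw [ENNReal.ofReal_ofNat]
    exact ⟨hρ1.indicator₀ (nullMeasurableSet_lt hdist aemeasurable_const),
      hsmall.trans_lt ENNReal.ofReal_lt_top⟩
  have hh : MemLp h (.ofReal γ) μ :=
    ⟨hρ1.indicator₀ (nullMeasurableSet_le aemeasurable_const hdist),
      hlarge.trans_lt ENNReal.ofReal_lt_top⟩
  have hsplit : g + h = fun x => ρ x - 1 := indicator_lt_add_indicator_le (|ρ · - 1|) _ _
  have hneg (x) : 1 - ρ x = -(g x + h x) := by rw [← Pi.add_apply, hsplit, neg_sub]
  simp only [hneg, neg_mul, integral_neg, abs_neg]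
  have hg_le : (eLpNorm g (.ofReal 2) μ).toReal ≤ ε :=
    ENNReal.toReal_le_of_le_ofReal hε (by simpa only [ENNReal.ofReal_ofNat] using hsmall)
  have hh_le : (eLpNorm h (.ofReal γ) μ).toReal ≤ ε ^ (2 / γ) :=
    ENNReal.toReal_le_of_le_ofReal (by positivity) hlarge
  have hKγ : 0 ≤ K ^ (finrank ℝ E / γ) := by positivity
  have hK2 : 0 ≤ K ^ (finrank ℝ E / 2 : ℝ) := by positivity
  refine (abs_integral_add_mul_norm_sq_le hE hp hγ hg hh hf hfc).trans ?_
  rw [add_comm, ← hK]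
  gcongr <;> linarith

end Sobolev

/-- With `γ > 3/2` and `γ′ = γ/(γ−1)`, if
`‖(ρ−1)1_{|ρ−1|<1/2}‖_{L²} ≤ ε` and `‖(ρ−1)1_{|ρ−1|≥1/2}‖_{L^γ} ≤ ε^{2/γ}`, then for every
`f ∈ C_c^∞(ℝ³;ℝ³)`:
`|∫ (1−ρ)|f|² dx| ≤ c ε^{2/γ} ‖f‖_{L²}^{(3/γ′)−1} ‖∇f‖_{L²}^{3(1−1/γ′)} + c ε ‖f‖_{L²}^{1/2} ‖∇f‖_{L²}^{3/2}`. -/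
theorem stmt_10 (γ : ℝ) (hγ : 3 / 2 < γ) :
    ∃ c : ℝ, 0 < c ∧ ∀ ε : ℝ, 0 < ε →
      ∀ ρ : EuclideanSpace ℝ (Fin 3) → ℝ, Measurable ρ → (∀ x, 0 ≤ ρ x) →
      eLpNorm ({x | |ρ x - 1| < 1 / 2}.indicator fun x => ρ x - 1) 2 volume
          ≤ ENNReal.ofReal ε →
      eLpNorm ({x | 1 / 2 ≤ |ρ x - 1|}.indicator fun x => ρ x - 1) (ENNReal.ofReal γ) volume
          ≤ ENNReal.ofReal (ε ^ (2 / γ)) →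
      ∀ f : EuclideanSpace ℝ (Fin 3) → EuclideanSpace ℝ (Fin 3),
        ContDiff ℝ (⊤ : ℕ∞) f → HasCompactSupport f →
        |∫ x, (1 - ρ x) * ‖f x‖ ^ 2|
          ≤ c * ε ^ (2 / γ)
              * (eLpNorm f 2 volume).toReal ^ (3 / (γ / (γ - 1)) - 1)
              * (eLpNorm (fun x => ‖fderiv ℝ f x‖) 2 volume).toReal
                  ^ (3 * (1 - 1 / (γ / (γ - 1))))
            + c * ε * (eLpNorm f 2 volume).toReal ^ ((1 : ℝ) / 2)
              * (eLpNorm (fun x => ‖fderiv ℝ f x‖) 2 volume).toReal ^ ((3 : ℝ) / 2) := by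
  have hγ0 : γ ≠ 0 := by linarith
  have hexp₁ : 3 / (γ / (γ - 1)) - 1 = 2 - 3 / γ := by
    rw [div_div_eq_mul_div, mul_sub_one, sub_div, mul_div_cancel_right₀ _ hγ0]
    ring
  have hexp₂ : 3 * (1 - 1 / (γ / (γ - 1))) = 3 / γ := by
    rw [one_div_div, sub_div, div_self hγ0]
    ring
  have hexp₃ : (1 : ℝ) / 2 = 2 - 3 / 2 := by norm_num
  obtain ⟨c, hc, bound⟩ := stmt_10_general (E := EuclideanSpace ℝ (Fin 3))
    (F := EuclideanSpace ℝ (Fin 3)) (μ := volume) (by simp) (by simp) (by simpa using hγ.le)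
  refine ⟨c, hc, fun ε hε ρ hρ _ hsmall hlarge f hf hfc => ?_⟩
  rw [hexp₁, hexp₂, hexp₃, eLpNorm_norm]
  simpa using
    bound ε hε.le ρ hρ.aestronglyMeasurable hsmall hlarge f (hf.of_le (by simp)) hfc
end

section
/- Let γ > 3/2. There exists a constant C = C(γ) such that the following holds. Let ε ∈ (0, 1], let ρ : ℝ³ → [0, ∞) be measurable with ‖(ρ − 1) 1_{{|ρ−1| < 1/2}}‖_{L²(ℝ³)} ≤ ε and ‖(ρ − 1) 1_{{|ρ−1| ≥ 1/2}}‖_{L^γ(ℝ³)} ≤ ε^{2/γ}, and let f ∈ C_c^∞(ℝ³; ℝ³) satisfy ∫_{ℝ³} ρ |f|² dx ≤ 1 and ∫_{ℝ³} |∇f|² dx ≤ 1. Then ∫_{ℝ³} |f|² dx ≤ C. -/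
open MeasureTheory
open scoped ENNReal NNReal

/-! Where `ρ ≥ 1/2`, the weighted mass `∫ ρ|f|²` controls `|f|²`. By Chebyshev's inequality the
remaining set `{ρ < 1/2}` has measure at most `2 ^ γ`, and there Hölder's inequality followed by the
Gagliardo–Nirenberg–Sobolev inequality bounds `|f|²` by the gradient. -/

section Measure

variable {α F : Type*} [MeasurableSpace α] [NormedAddCommGroup F] {μ : Measure α}

lemma lintegral_rpow_enorm_eq_ofReal_integral {p : ℝ≥0} (hp : p ≠ 0) {g : α → F}
    (hg : MemLp g p μ) :
    ∫⁻ x, ‖g x‖ₑ ^ (p : ℝ) ∂μ = ENNReal.ofReal (∫ x, ‖g x‖ ^ (p : ℝ) ∂μ) := by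
  have hint : Integrable (fun x ↦ ‖g x‖ ^ (p : ℝ)) μ :=
    hg.integrable_norm_rpow (mod_cast hp) ENNReal.coe_ne_top
  rw [ofReal_integral_eq_lintegral_ofReal hint (.of_forall fun x ↦ by positivity)]
  refine lintegral_congr fun x ↦ ?_
  rw [← ENNReal.ofReal_rpow_of_nonneg (norm_nonneg _) p.coe_nonneg, ofReal_norm]

lemma eLpNorm_le_one_iff_integral_rpow_norm_le_one {p : ℝ≥0} (hp : p ≠ 0) {g : α → F}
    (hg : MemLp g p μ) : eLpNorm g p μ ≤ 1 ↔ ∫ x, ‖g x‖ ^ (p : ℝ) ∂μ ≤ 1 := by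
  rw [← ENNReal.rpow_le_rpow_iff (z := p) (by positivity), ENNReal.one_rpow,
    eLpNorm_nnreal_pow_eq_lintegral hp, lintegral_rpow_enorm_eq_ofReal_integral hp hg,
    ENNReal.ofReal_le_one]

lemma meas_ge_le_mul_rpow_eLpNorm_indicator {h : α → F} (hh : AEStronglyMeasurable h μ)
    {p : ℝ≥0∞} (hp0 : p ≠ 0) (hp : p ≠ ∞) {c : ℝ} (hc : 0 < c) :
    μ {x | c ≤ ‖h x‖} ≤ (ENNReal.ofReal c)⁻¹ ^ p.toReal *
      eLpNorm ({x | c ≤ ‖h x‖}.indicator h) p μ ^ p.toReal := by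
  have hmeas : NullMeasurableSet {x | c ≤ ‖h x‖} μ :=
    nullMeasurableSet_le aemeasurable_const hh.norm.aemeasurable
  refine le_trans (measure_mono fun x hx ↦ ?_) <| meas_ge_le_mul_pow_eLpNorm_enorm μ hp0 hp
    (hh.indicator₀ hmeas) (by simpa using hc) (by simp)
  rw [Set.mem_ofPred_eq, Set.indicator_of_mem hx, ← ofReal_norm]
  exact ENNReal.ofReal_le_ofReal hx

lemma meas_ofReal_lt_one_sub_le_inv_rpow {ρ : α → ℝ} (hρ : AEMeasurable ρ μ) {γ δ : ℝ}
    (hγ : 0 < γ) (hδ : 0 < δ)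
    (hdev : eLpNorm ({x | δ ≤ |ρ x - 1|}.indicator fun x ↦ ρ x - 1) (ENNReal.ofReal γ) μ ≤ 1) :
    μ {x | ENNReal.ofReal (ρ x) < ENNReal.ofReal (1 - δ)} ≤ (ENNReal.ofReal δ)⁻¹ ^ γ := by
  have hsub : {x | ENNReal.ofReal (ρ x) < ENNReal.ofReal (1 - δ)} ⊆ {x | δ ≤ |ρ x - 1|} := by
    intro x hx
    have hx' : ρ x < 1 - δ := (ENNReal.ofReal_lt_ofReal_iff'.1 hx).1
    have hle : δ ≤ -(ρ x - 1) := by linarith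
    exact hle.trans (neg_le_abs _)
  have hchebyshev := meas_ge_le_mul_rpow_eLpNorm_indicator
    (hρ.sub_const 1).aestronglyMeasurable (p := ENNReal.ofReal γ) (by simpa using hγ)
    ENNReal.ofReal_ne_top hδ
  rw [ENNReal.toReal_ofReal hγ.le] at hchebyshev
  exact (measure_mono hsub).trans <| hchebyshev.trans <|
    mul_le_of_le_one_right' (ENNReal.rpow_le_one hdev hγ.le)

lemma lintegral_le_inv_mul_lintegral_mul_add_setLIntegral {w : α → ℝ≥0∞} (hw : AEMeasurable w μ)
    (g : α → ℝ≥0∞) {c : ℝ≥0∞} (hc0 : c ≠ 0) (hc : c ≠ ∞) :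
    ∫⁻ x, g x ∂μ ≤ c⁻¹ * ∫⁻ x, w x * g x ∂μ + ∫⁻ x in {x | w x < c}, g x ∂μ := by
  have hs : NullMeasurableSet {x | w x < c} μ := nullMeasurableSet_lt hw aemeasurable_const
  have hlarge : ∫⁻ x in {x | w x < c}ᶜ, g x ∂μ ≤ c⁻¹ * ∫⁻ x, w x * g x ∂μ := by
    rw [← lintegral_const_mul' _ _ (ENNReal.inv_ne_top.2 hc0)]
    refine (lintegral_mono_ae ?_).trans (setLIntegral_le_lintegral _ _)
    filter_upwards [ae_restrict_mem₀ hs.compl] with x hx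
    rw [← mul_assoc]
    refine le_mul_of_one_le_left' ?_
    rw [← ENNReal.inv_mul_cancel hc0 hc]
    gcongr
    exact not_lt.1 hx
  calc ∫⁻ x, g x ∂μ = ∫⁻ x in {x | w x < c}ᶜ ∪ {x | w x < c}, g x ∂μ := by
        rw [Set.compl_union_self, Measure.restrict_univ]
    _ ≤ ∫⁻ x in {x | w x < c}ᶜ, g x ∂μ + ∫⁻ x in {x | w x < c}, g x ∂μ :=
        (lintegral_mono' (Measure.restrict_union_le _ _) le_rfl).trans_eq
          (lintegral_add_measure _ _ _)
    _ ≤ _ := by gcongr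

end Measure

section Sobolev

open Module

variable {E F : Type*} [NormedAddCommGroup E] [NormedSpace ℝ E] [FiniteDimensional ℝ E]
  [MeasurableSpace E] [BorelSpace E] [NormedAddCommGroup F] [InnerProductSpace ℝ F]
  (μ : Measure E) [μ.IsAddHaarMeasure] {p : ℝ≥0}

lemma eLpNorm_restrict_le_eLpNorm_fderiv_mul_rpow_measure (hp : 1 ≤ p)
    (hpn : p < finrank ℝ E) (s : Set E) {f : E → F} (hf : ContDiff ℝ 1 f)
    (hfc : HasCompactSupport f) :
    eLpNorm f p (μ.restrict s) ≤ eLpNormLESNormFDerivOfEqInnerConst μ p *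
      eLpNorm (fderiv ℝ f) p μ * μ s ^ (finrank ℝ E : ℝ)⁻¹ := by
  have hp0 : 0 < p := one_pos.trans_le hp
  have hinv : (finrank ℝ E : ℝ≥0)⁻¹ < p⁻¹ := inv_strictAnti₀ hp0 hpn
  set q : ℝ≥0 := (p⁻¹ - (finrank ℝ E : ℝ≥0)⁻¹)⁻¹ with hq_def
  have hq : (q : ℝ)⁻¹ = (p : ℝ)⁻¹ - (finrank ℝ E : ℝ)⁻¹ := by
    simp [hq_def, NNReal.coe_sub hinv.le]
  have hpq : p ≤ q := (le_inv_comm₀ hp0 (tsub_pos_of_lt hinv)).2 tsub_le_self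
  have hexp : 1 / (p : ℝ≥0∞).toReal - 1 / (q : ℝ≥0∞).toReal = (finrank ℝ E : ℝ)⁻¹ := by
    simp [hq]
  calc eLpNorm f p (μ.restrict s)
      ≤ eLpNorm f q (μ.restrict s) * μ s ^ (finrank ℝ E : ℝ)⁻¹ := by
        simpa only [hexp, Measure.restrict_apply_univ] using
          eLpNorm_le_eLpNorm_mul_rpow_measure_univ (μ := μ.restrict s)
            (ENNReal.coe_le_coe.2 hpq) hf.continuous.aestronglyMeasurable
    _ ≤ eLpNorm f q μ * μ s ^ (finrank ℝ E : ℝ)⁻¹ := by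
        gcongr
        exact Measure.restrict_le_self
    _ ≤ _ := by
        gcongr
        exact eLpNorm_le_eLpNorm_fderiv_of_eq_inner μ hf hfc hp
          (by exact_mod_cast hp0.trans hpn) hq

lemma lintegral_rpow_enorm_le_weighted_add_fderiv (hp : 1 ≤ p) (hpn : p < finrank ℝ E)
    {w : E → ℝ≥0∞} (hw : AEMeasurable w μ) {c : ℝ≥0∞} (hc0 : c ≠ 0) (hc : c ≠ ∞)
    {f : E → F} (hf : ContDiff ℝ 1 f) (hfc : HasCompactSupport f) :
    ∫⁻ x, ‖f x‖ₑ ^ (p : ℝ) ∂μ ≤ c⁻¹ * ∫⁻ x, w x * ‖f x‖ₑ ^ (p : ℝ) ∂μ +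
      (eLpNormLESNormFDerivOfEqInnerConst μ p * eLpNorm (fderiv ℝ f) p μ *
        μ {x | w x < c} ^ (finrank ℝ E : ℝ)⁻¹) ^ (p : ℝ) := by
  refine (lintegral_le_inv_mul_lintegral_mul_add_setLIntegral hw _ hc0 hc).trans ?_
  rw [← eLpNorm_nnreal_pow_eq_lintegral (μ := μ.restrict _) (one_pos.trans_le hp).ne']
  gcongr
  exact eLpNorm_restrict_le_eLpNorm_fderiv_mul_rpow_measure μ hp hpn _ hf hfc

variable (F) in
theorem stmt_11_general (hp : 1 ≤ p) (hpn : p < finrank ℝ E) {γ : ℝ} (hγ : 0 < γ) {δ : ℝ}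
    (hδ : δ ∈ Set.Ioo 0 1) :
    ∃ C : ℝ, 0 < C ∧ ∀ ρ : E → ℝ, AEMeasurable ρ μ →
      eLpNorm ({x | δ ≤ |ρ x - 1|}.indicator fun x ↦ ρ x - 1) (ENNReal.ofReal γ) μ ≤ 1 →
      ∀ f : E → F, ContDiff ℝ 1 f → HasCompactSupport f →
        ∫⁻ x, ENNReal.ofReal (ρ x * ‖f x‖ ^ (p : ℝ)) ∂μ ≤ 1 →
        ∫ x, ‖fderiv ℝ f x‖ ^ (p : ℝ) ∂μ ≤ 1 →
        ∫ x, ‖f x‖ ^ (p : ℝ) ∂μ ≤ C := by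
  have hp0 : p ≠ 0 := (one_pos.trans_le hp).ne'
  have hδ0 : ENNReal.ofReal δ ≠ 0 := by simpa using hδ.1
  set c : ℝ≥0∞ := ENNReal.ofReal (1 - δ)
  have hc0 : c ≠ 0 := by simpa [c] using hδ.2
  set K := eLpNormLESNormFDerivOfEqInnerConst μ p
  set C : ℝ≥0∞ := c⁻¹ + (K * ((ENNReal.ofReal δ)⁻¹ ^ γ) ^ (finrank ℝ E : ℝ)⁻¹) ^ (p : ℝ)
  have hC : C ≠ ∞ := by finiteness
  refine ⟨C.toReal, ENNReal.toReal_pos (by simp [C, c]) hC,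
    fun ρ hρ hdev f hf hfc hmass hgrad ↦ ?_⟩
  have hfderiv : eLpNorm (fderiv ℝ f) p μ ≤ 1 :=
    (eLpNorm_le_one_iff_integral_rpow_norm_le_one hp0 <|
      (hf.continuous_fderiv one_ne_zero).memLp_of_hasCompactSupport (hfc.fderiv ℝ)).2 hgrad
  have hmass' : ∫⁻ x, ENNReal.ofReal (ρ x) * ‖f x‖ₑ ^ (p : ℝ) ∂μ ≤ 1 := by
    convert hmass using 3 with x
    rw [ENNReal.ofReal_mul' (by positivity), ← ofReal_norm,
      ENNReal.ofReal_rpow_of_nonneg (norm_nonneg _) p.coe_nonneg]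
  rw [← ENNReal.ofReal_le_iff_le_toReal hC, ← lintegral_rpow_enorm_eq_ofReal_integral hp0
    (hf.continuous.memLp_of_hasCompactSupport hfc)]
  calc ∫⁻ x, ‖f x‖ₑ ^ (p : ℝ) ∂μ
      ≤ c⁻¹ * ∫⁻ x, ENNReal.ofReal (ρ x) * ‖f x‖ₑ ^ (p : ℝ) ∂μ + (K * eLpNorm (fderiv ℝ f) p μ *
          μ {x | ENNReal.ofReal (ρ x) < c} ^ (finrank ℝ E : ℝ)⁻¹) ^ (p : ℝ) :=
        lintegral_rpow_enorm_le_weighted_add_fderiv μ hp hpn hρ.ennreal_ofReal hc0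
          ENNReal.ofReal_ne_top hf hfc
    _ ≤ c⁻¹ * 1 + (K * 1 * ((ENNReal.ofReal δ)⁻¹ ^ γ) ^ (finrank ℝ E : ℝ)⁻¹) ^ (p : ℝ) := by
        gcongr
        exact meas_ofReal_lt_one_sub_le_inv_rpow hρ hγ hδ.1 hdev
    _ = C := by rw [mul_one, mul_one]

end Sobolev

/-- With `γ > 3/2`, if `ε ∈ (0,1]`, `ρ ≥ 0` satisfies
`‖(ρ−1)1_{|ρ−1|<1/2}‖_{L²} ≤ ε` and `‖(ρ−1)1_{|ρ−1|≥1/2}‖_{L^γ} ≤ ε^{2/γ}`,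
and `f ∈ C_c^∞(ℝ³;ℝ³)` satisfies `∫ ρ|f|² ≤ 1` and `∫ |∇f|² ≤ 1`, then `∫ |f|² ≤ C(γ)`. -/
theorem stmt_11 (γ : ℝ) (hγ : 3 / 2 < γ) :
    ∃ C : ℝ, 0 < C ∧ ∀ ε : ℝ, ε ∈ Set.Ioc (0 : ℝ) 1 →
      ∀ ρ : EuclideanSpace ℝ (Fin 3) → ℝ, Measurable ρ → (∀ x, 0 ≤ ρ x) →
      eLpNorm ({x | |ρ x - 1| < 1 / 2}.indicator fun x => ρ x - 1) 2 volume
          ≤ ENNReal.ofReal ε →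
      eLpNorm ({x | 1 / 2 ≤ |ρ x - 1|}.indicator fun x => ρ x - 1) (ENNReal.ofReal γ) volume
          ≤ ENNReal.ofReal (ε ^ (2 / γ)) →
      ∀ f : EuclideanSpace ℝ (Fin 3) → EuclideanSpace ℝ (Fin 3),
        ContDiff ℝ (⊤ : ℕ∞) f → HasCompactSupport f →
        (∫⁻ x, ENNReal.ofReal (ρ x * ‖f x‖ ^ 2)) ≤ 1 →
        (∫ x, ‖fderiv ℝ f x‖ ^ 2) ≤ 1 →
        (∫ x, ‖f x‖ ^ 2) ≤ C := by
  obtain ⟨C, hC, hbound⟩ := stmt_11_general (EuclideanSpace ℝ (Fin 3))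
    (volume : Measure (EuclideanSpace ℝ (Fin 3))) (p := 2) (γ := γ) (δ := 1 / 2)
    (by norm_num) (by norm_num) (by linarith) (by norm_num)
  refine ⟨C, hC, fun ε hε ρ hρ _ _ hdev f hf hfc hmass hgrad ↦ ?_⟩
  have hdev_one := hdev.trans <| ENNReal.ofReal_le_one.2 <|
    Real.rpow_le_one hε.1.le hε.2 (by positivity)
  simpa using hbound ρ hρ.aemeasurable hdev_one f (hf.of_le (by simp)) hfc
    (by simpa using hmass) (by simpa using hgrad)
end
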